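/- Arrow's Theorem for linear orders: Let A be a finite set with |A| ≥ 3 and I a finite set. Let σ : L(A)^I → L(A) be a function from profiles of linear orders on A to linear orders on A satisfying IIA (if two profiles agree on the relative ranking of a and b for every individual, then the outputs agree on the relative ranking of a and b) and Pareto (if every individual ranks a above b, then σ ranks a above b). Then σ is a dictatorship: there exists i ∈ I such that σ(p) = pᵢ for all profiles p. -/

import Mathlib

/-- A linear preference relation: transitive, connected, and antisymmetric. -/
def IsLinPref {A : Type*} (R : A → A → Prop) : Prop :=
  (∀ a b c, R a b → R b c → R a c) ∧ (∀ a b, R a b ∨ R b a) ∧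
  (∀ a b, R a b → R b a → a = b)

/-- The strict part of a preference relation. -/
def strictly {A : Type*} (R : A → A → Prop) (a b : A) : Prop := R a b ∧ ¬ R b a

/-!
A coalition `S` is almost decisive for `a` over `b` if `a` beats `b` socially whenever `S` is
exactly the set of supporters of `a` against `b`. If `S` is almost decisive for `a` over `b` and
`T` for `b` over `c`, then every `W` with `S ∩ T ⊆ W ⊆ S ∪ T` is almost decisive for `a` over `c`,
because these inclusions say precisely that each voter's three pairwise comparisons are acyclic.
Taking one of `S`, `T` to be the set of all voters (Pareto) shows that almost decisiveness does not
depend on the pair of alternatives and is inherited by larger coalitions; taking `W = S ∩ T` gives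
intersections. So the almost decisive coalitions form an ultrafilter, which is principal when there
are finitely many voters; its generator is the dictator.
-/

/-- The type `L(A)` of linear preferences on `A`; `r.1 a b` reads "`r` ranks `a` above `b`". -/
abbrev LinPref (A : Type*) := {R : A → A → Prop // IsLinPref R}

section

variable {A I : Type*} {a b c : A} {S T W : Set I} {σ : (I → LinPref A) → LinPref A}

namespace LinPref

lemma refl (r : LinPref A) (a : A) : r.1 a a :=
  or_self_iff.1 (r.2.2.1 a a)

lemma trans (r : LinPref A) (hab : r.1 a b) (hbc : r.1 b c) : r.1 a c :=
  r.2.1 a b c hab hbc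

lemma not_rel_iff (r : LinPref A) (hab : a ≠ b) : ¬ r.1 a b ↔ r.1 b a :=
  ⟨(r.2.2.1 a b).resolve_left, fun hba h => hab (r.2.2.2 a b h hba)⟩

lemma strictly_iff (r : LinPref A) (hab : a ≠ b) : strictly r.1 a b ↔ r.1 a b :=
  and_iff_left_of_imp fun h h' => (r.not_rel_iff hab).2 h' h

lemma exists_rel_iff_lt {β : Type*} [LinearOrder β] (f : A → β) :
    ∃ r : LinPref A, ∀ x y, f x ≠ f y → (r.1 x y ↔ f x < f y) := by
  classical
  -- Ties of `f` are broken by a well-order of `A`.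
  let _ : LinearOrder A := linearOrderOfSTO WellOrderingRel
  let g : A → β ×ₗ A := fun x => toLex (f x, x)
  have hg : g.Injective := fun x y h => congrArg (fun z => (ofLex z).2) h
  refine ⟨⟨fun x y => g x ≤ g y, fun _ _ _ => le_trans, fun _ _ => le_total _ _,
    fun _ _ h h' => hg (h.antisymm h')⟩, fun x y hxy => ?_⟩
  simp [g, Prod.Lex.toLex_le_toLex, hxy]

lemma exists_rel_iff (hab : a ≠ b) (hac : a ≠ c) (hbc : b ≠ c) {P Q R : Prop}
    (hR : P → Q → R) (hPQ : R → P ∨ Q) :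
    ∃ r : LinPref A, (r.1 a b ↔ P) ∧ (r.1 b c ↔ Q) ∧ (r.1 a c ↔ R) := by
  classical
  -- The rank of an alternative is the number of the other two that are to be placed above it.
  let f : A → ℕ := fun x =>
    if x = a then (if P then 0 else 1) + (if R then 0 else 1)
    else if x = b then (if P then 1 else 0) + (if Q then 0 else 1)
    else (if Q then 1 else 0) + (if R then 1 else 0)
  have hfa : f a = (if P then 0 else 1) + (if R then 0 else 1) := by simp [f]
  have hfb : f b = (if P then 1 else 0) + (if Q then 0 else 1) := by simp [f, hab.symm]
  have hfc : f c = (if Q then 1 else 0) + (if R then 1 else 0) := by simp [f, hac.symm, hbc.symm]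
  obtain ⟨r, hr⟩ := exists_rel_iff_lt f
  refine ⟨r, (hr a b ?_).trans ?_, (hr b c ?_).trans ?_, (hr a c ?_).trans ?_⟩ <;>
    simp only [hfa, hfb, hfc] <;> grind

end LinPref

lemma exists_profile_rel_iff (hab : a ≠ b) (S : Set I) :
    ∃ p : I → LinPref A, ∀ i, (p i).1 a b ↔ i ∈ S := by
  classical
  choose p hp using fun i =>
    LinPref.exists_rel_iff_lt fun x : A => if x = a ↔ i ∈ S then 0 else 1
  refine ⟨p, fun i => (hp i a b ?_).trans ?_⟩ <;> by_cases hi : i ∈ S <;> simp [hi, hab.symm]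

lemma exists_profile_rel_iff₃ (hab : a ≠ b) (hac : a ≠ c) (hbc : b ≠ c)
    (hW : S ∩ T ⊆ W) (hST : W ⊆ S ∪ T) :
    ∃ p : I → LinPref A, (∀ i, (p i).1 a b ↔ i ∈ S) ∧ (∀ i, (p i).1 b c ↔ i ∈ T) ∧
      ∀ i, (p i).1 a c ↔ i ∈ W := by
  choose p hpS hpT hpW using fun i =>
    LinPref.exists_rel_iff hab hac hbc (fun hS hT => hW ⟨hS, hT⟩) (@hST i)
  exact ⟨p, hpS, hpT, hpW⟩

/-- Independence of irrelevant alternatives: the social ranking of two alternatives is determined by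
their individual rankings. -/
def IIA (σ : (I → LinPref A) → LinPref A) : Prop :=
  ∀ a b : A, ∀ p q : I → LinPref A,
    (∀ i, ((p i).1 a b ↔ (q i).1 a b) ∧ ((p i).1 b a ↔ (q i).1 b a)) →
    (((σ p).1 a b ↔ (σ q).1 a b) ∧ ((σ p).1 b a ↔ (σ q).1 b a))

/-- The Pareto condition: society respects every unanimous strict preference. -/
def Pareto (σ : (I → LinPref A) → LinPref A) : Prop :=
  ∀ a b : A, ∀ p : I → LinPref A, (∀ i, strictly (p i).1 a b) → strictly (σ p).1 a b

/-- `S` is almost decisive for `a` over `b` if society ranks `a` above `b` whenever the individuals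
who do so are exactly the members of `S`. (Full decisiveness would only ask that they include
`S`.) -/
def AlmostDecisive (σ : (I → LinPref A) → LinPref A) (S : Set I) (a b : A) : Prop :=
  ∀ p : I → LinPref A, (∀ i, (p i).1 a b ↔ i ∈ S) → (σ p).1 a b

lemma IIA.almostDecisive_iff (hIIA : IIA σ) (hab : a ≠ b) {p : I → LinPref A}
    (hp : ∀ i, (p i).1 a b ↔ i ∈ S) : AlmostDecisive σ S a b ↔ (σ p).1 a b := by
  refine ⟨fun hS => hS p hp, fun h q hq => ?_⟩
  have agree (i : I) : (p i).1 a b ↔ (q i).1 a b := (hp i).trans (hq i).symm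
  refine (hIIA a b p q fun i => ⟨agree i, ?_⟩).1.1 h
  rw [← (p i).not_rel_iff hab, ← (q i).not_rel_iff hab, agree i]

lemma Pareto.almostDecisive_univ (hP : Pareto σ) (hab : a ≠ b) :
    AlmostDecisive σ Set.univ a b := fun p hp =>
  (hP a b p fun i => ((p i).strictly_iff hab).2 ((hp i).2 trivial)).1

lemma IIA.almostDecisive_compl_iff (hIIA : IIA σ) (hab : a ≠ b) :
    AlmostDecisive σ Sᶜ b a ↔ ¬ AlmostDecisive σ S a b := by
  obtain ⟨p, hp⟩ := exists_profile_rel_iff hab S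
  have hp' (i : I) : (p i).1 b a ↔ i ∈ Sᶜ := by
    rw [← (p i).not_rel_iff hab, hp i, Set.mem_compl_iff]
  rw [hIIA.almostDecisive_iff hab.symm hp', hIIA.almostDecisive_iff hab hp, (σ p).not_rel_iff hab]

lemma IIA.almostDecisive_trans (hIIA : IIA σ) (hab : a ≠ b) (hac : a ≠ c) (hbc : b ≠ c)
    (hS : AlmostDecisive σ S a b) (hT : AlmostDecisive σ T b c)
    (hW : S ∩ T ⊆ W) (hST : W ⊆ S ∪ T) : AlmostDecisive σ W a c := by
  obtain ⟨p, hpS, hpT, hpW⟩ := exists_profile_rel_iff₃ hab hac hbc hW hST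
  exact (hIIA.almostDecisive_iff hac hpW).2 ((σ p).trans (hS p hpS) (hT p hpT))

lemma AlmostDecisive.change_right (hS : AlmostDecisive σ S a b) (hIIA : IIA σ) (hP : Pareto σ)
    (hab : a ≠ b) (hac : a ≠ c) : AlmostDecisive σ S a c := by
  obtain rfl | hbc := eq_or_ne b c
  · exact hS
  · exact hIIA.almostDecisive_trans hab hac hbc hS (hP.almostDecisive_univ hbc) (by simp) (by simp)

lemma AlmostDecisive.change_left (hS : AlmostDecisive σ S a b) (hIIA : IIA σ) (hP : Pareto σ)
    (hab : a ≠ b) (hcb : c ≠ b) : AlmostDecisive σ S c b := by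
  obtain rfl | hca := eq_or_ne c a
  · exact hS
  · exact hIIA.almostDecisive_trans hca hcb hab (hP.almostDecisive_univ hca) hS (by simp) (by simp)

lemma exists_ne_ne (h3 : ∃ x y z : A, x ≠ y ∧ x ≠ z ∧ y ≠ z) (a b : A) : ∃ c, a ≠ c ∧ b ≠ c := by
  obtain ⟨x, y, z, hxy, hxz, hyz⟩ := h3
  by_contra! h
  have hx := h x
  have hy := h y
  have hz := h z
  grind +splitImp

lemma AlmostDecisive.neutral (hS : AlmostDecisive σ S a b) (hIIA : IIA σ) (hP : Pareto σ)
    (h3 : ∃ x y z : A, x ≠ y ∧ x ≠ z ∧ y ≠ z) (hab : a ≠ b) {x y : A} (hxy : x ≠ y) :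
    AlmostDecisive σ S x y := by
  obtain ⟨c, hac, hxc⟩ := exists_ne_ne h3 a x
  have hS_ac : AlmostDecisive σ S a c := hS.change_right hIIA hP hab hac
  have hS_xc : AlmostDecisive σ S x c := hS_ac.change_left hIIA hP hac hxc
  exact hS_xc.change_right hIIA hP hxc hxy

lemma exists_ultrafilter_mem_iff_almostDecisive (hIIA : IIA σ) (hP : Pareto σ)
    (h3 : ∃ x y z : A, x ≠ y ∧ x ≠ z ∧ y ≠ z) :
    ∃ U : Ultrafilter I, ∀ (S : Set I) {a b : A}, a ≠ b → (S ∈ U ↔ AlmostDecisive σ S a b) := by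
  have neutral {S : Set I} {a b x y : A} (hab : a ≠ b) (hxy : x ≠ y)
      (hS : AlmostDecisive σ S a b) : AlmostDecisive σ S x y := hS.neutral hIIA hP h3 hab hxy
  obtain ⟨a, b, c, hab, hac, hbc⟩ := h3
  let F : Filter I :=
    { sets := {S | AlmostDecisive σ S a b}
      univ_sets := hP.almostDecisive_univ hab
      sets_of_superset := fun {S T} hS hST => neutral hac hab <|
        hIIA.almostDecisive_trans hab hac hbc hS (hP.almostDecisive_univ hbc)
          (Set.inter_subset_left.trans hST) (by simp)
      inter_sets := fun {S T} hS hT => neutral hac hab <|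
        hIIA.almostDecisive_trans hab hac hbc hS (neutral hab hbc hT) subset_rfl
          (Set.inter_subset_left.trans Set.subset_union_left) }
  refine ⟨Ultrafilter.ofComplNotMemIff F fun S => ?_, fun S x y hxy =>
    ⟨neutral hab hxy, neutral hxy hab⟩⟩
  calc Sᶜ ∉ F ↔ ¬ AlmostDecisive σ Sᶜ b a := not_congr ⟨neutral hab hab.symm, neutral hab.symm hab⟩
    _ ↔ S ∈ F := (not_congr (hIIA.almostDecisive_compl_iff hab)).trans not_not

/-- The Kirman–Sondermann ultrafilter form of Arrow's theorem. -/
theorem stmt_19_general (h3 : ∃ x y z : A, x ≠ y ∧ x ≠ z ∧ y ≠ z)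
    (σ : (I → LinPref A) → LinPref A) (hIIA : IIA σ) (hP : Pareto σ) :
    ∃ U : Ultrafilter I, ∀ (p : I → LinPref A) (a b : A),
      (σ p).1 a b ↔ ∀ᶠ i in U, (p i).1 a b := by
  obtain ⟨U, hU⟩ := exists_ultrafilter_mem_iff_almostDecisive hIIA hP h3
  refine ⟨U, fun p a b => ?_⟩
  obtain rfl | hab := eq_or_ne a b
  · exact iff_of_true ((σ p).refl a) (.of_forall fun i => (p i).refl a)
  · exact ((hU _ hab).trans (hIIA.almostDecisive_iff hab fun _ => Iff.rfl)).symm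

end

theorem stmt_19 {A I : Type*} [Finite A] [Finite I]
    (h3 : ∃ x y z : A, x ≠ y ∧ x ≠ z ∧ y ≠ z)
    (σ : (I → {R : A → A → Prop // IsLinPref R}) → {R : A → A → Prop // IsLinPref R})
    (hIIA : ∀ a b : A, ∀ p q : I → {R : A → A → Prop // IsLinPref R},
      (∀ i, ((p i).1 a b ↔ (q i).1 a b) ∧ ((p i).1 b a ↔ (q i).1 b a)) →
      (((σ p).1 a b ↔ (σ q).1 a b) ∧ ((σ p).1 b a ↔ (σ q).1 b a)))
    (hP : ∀ a b : A, ∀ p : I → {R : A → A → Prop // IsLinPref R},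
      (∀ i, strictly (p i).1 a b) → strictly (σ p).1 a b) :
    ∃ i : I, ∀ p : I → {R : A → A → Prop // IsLinPref R}, σ p = p i := by
  obtain ⟨U, hU⟩ := stmt_19_general h3 σ hIIA hP
  obtain ⟨i, rfl⟩ := U.eq_pure_of_finite
  exact ⟨i, fun p => Subtype.ext (funext₂ fun a b => propext (hU p a b))⟩
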